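/- Let d>0 be an arbitrary real. There exists M>0 such that for any δ∈(0,1), with high probability over the choice of G∼G(n,d/n), every connected set S of vertices of G with |S| = ⌈δ·log n⌉ satisfies deg_G(S) ≤ MΔ·|S|, where Δ = 1/(δ·log(1/δ)). -/

import Mathlib

/-!
The proof is a first moment argument. If `G[S]` is connected and `|S| = k`, a parent map `f : S → S`
towards a root (`exists_parentEdges`) exhibits `k - 1` distinct edges of `G`, and there are only
`k ^ k` such maps, so `C(n,k) k ^ k ≤ (e n) ^ k` pairs `(S, f)` have to be considered.

For a fixed pair, independence of the edges (`sum_graph_prod`) bounds the expectation of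
`l ^ (number of edges touching S)` on the event that all the edges of `f` are present by
`(p l) ^ (k - 1) exp (l p) ^ (k n)` (`moment_bound`). A degree sum above `t` forces more than `t / 2`
edges touching `S` (`sum_deg_le`), so Markov's inequality and the union bound (`bad_le`,
`bound_exp`) give, for `p = d / n`, a failure probability of at most
`exp (log n + k (1 + d + log l + l d) - (t / 2) log l)`.

With `l = 1 / δ` and `t = M k / (δ log (1 / δ))` the last term is `M k / (2 δ)`. Since
`log n ≤ k / δ` and `log (1 / δ) ≤ 1 / δ`, the choice `M = 8 + 4 d` makes this bound at most `1 / n`.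
-/

open Classical Filter

/-- The degree of a vertex. -/
noncomputable def deg {V : Type*} (G : SimpleGraph V) (v : V) : ℕ :=
  Nat.card {u : V // G.Adj v u}

/-- The number of edges of a graph. -/
noncomputable def edgeCount {V : Type*} (G : SimpleGraph V) : ℕ :=
  Nat.card G.edgeSet

/-- The probability that the Erdős–Rényi random graph `G(n,p)` satisfies property `P`:
each of the `n(n-1)/2` possible edges is present independently with probability `p`. -/
noncomputable def erProb (n : ℕ) (p : ℝ) (P : SimpleGraph (Fin n) → Prop) : ℝ :=
  ∑ G : SimpleGraph (Fin n),
    (if P G then p ^ edgeCount G * (1 - p) ^ (n.choose 2 - edgeCount G) else 0)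

/-! ### The random graph as a product over potential edges -/

/-- The unordered pairs of distinct vertices, that is, the potential edges. -/
noncomputable def pairs (n : ℕ) : Finset (Sym2 (Fin n)) :=
  Finset.univ.filter fun e => ¬ e.IsDiag

/-- The edge set of `G` as a finset (with classical decidability). -/
noncomputable def edges {n : ℕ} (G : SimpleGraph (Fin n)) : Finset (Sym2 (Fin n)) :=
  Finset.univ.filter fun e => e ∈ G.edgeSet

/-- The pairs having at least one endpoint in `S`. -/
noncomputable def touch {n : ℕ} (S : Finset (Fin n)) : Finset (Sym2 (Fin n)) :=
  Finset.univ.filter fun e => ∃ v ∈ S, v ∈ e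

/-- The probability of the single graph `G` under `G(n,p)`. -/
noncomputable def wt {n : ℕ} (p : ℝ) (G : SimpleGraph (Fin n)) : ℝ :=
  p ^ edgeCount G * (1 - p) ^ (n.choose 2 - edgeCount G)

/-- The edges `{v, f v}` of a parent map `f : S → S`; fixed points of `f`, such as the root,
contribute no edge. -/
noncomputable def parentEdges {n : ℕ} (S : Finset (Fin n)) (f : S → S) :
    Finset (Sym2 (Fin n)) :=
  (Finset.univ.image fun v : S => s((v : Fin n), (f v : Fin n))).filter fun e => ¬ e.IsDiag

lemma edges_subset_pairs {n : ℕ} (G : SimpleGraph (Fin n)) : edges G ⊆ pairs n := by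
  intro e he
  simp only [edges, pairs, Finset.mem_filter, Finset.mem_univ, true_and] at he ⊢
  exact G.not_isDiag_of_mem_edgeSet he

lemma card_edges {n : ℕ} (G : SimpleGraph (Fin n)) : (edges G).card = edgeCount G := by
  rw [edgeCount, Nat.card_eq_fintype_card, edges, Fintype.card_subtype]

lemma card_pairs (n : ℕ) : (pairs n).card = n.choose 2 := by
  have := Sym2.card_subtype_not_diag (α := Fin n)
  rw [Fintype.card_fin, Fintype.card_subtype] at this
  rw [← this, pairs]

/-- Summing over graphs amounts to expanding a product over the potential edges. -/
lemma sum_graph_prod {n : ℕ} (f g : Sym2 (Fin n) → ℝ) :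
    ∑ G : SimpleGraph (Fin n), (∏ e ∈ edges G, f e) * ∏ e ∈ pairs n \ edges G, g e
      = ∏ e ∈ pairs n, (f e + g e) := by
  rw [Finset.prod_add]
  refine Finset.sum_nbij' (fun G => edges G)
    (fun t => SimpleGraph.fromEdgeSet (t : Set (Sym2 (Fin n)))) ?_ ?_ ?_ ?_ ?_
  · intro G _
    exact Finset.mem_powerset.2 (edges_subset_pairs G)
  · intro t _
    exact Finset.mem_univ _
  · intro G _
    simp [edges]
  · intro t ht
    ext e
    have h : e ∈ t → ¬ e.IsDiag := fun he => by
      simpa [pairs] using Finset.mem_powerset.1 ht he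
    simp only [edges, Finset.mem_filter, Finset.mem_univ, true_and,
      SimpleGraph.edgeSet_fromEdgeSet]
    exact ⟨fun he => he.1, fun he => ⟨he, h he⟩⟩
  · intro G _
    rfl

lemma wt_eq_prod {n : ℕ} (p : ℝ) (G : SimpleGraph (Fin n)) :
    wt p G = (∏ _e ∈ edges G, p) * ∏ _e ∈ pairs n \ edges G, (1 - p) := by
  rw [Finset.prod_const, Finset.prod_const, Finset.card_sdiff_of_subset (edges_subset_pairs G),
    card_edges, card_pairs, wt]

lemma sum_wt (n : ℕ) (p : ℝ) : ∑ G : SimpleGraph (Fin n), wt p G = 1 := by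
  simp only [wt_eq_prod]
  rw [sum_graph_prod]
  simp

lemma wt_nonneg {n : ℕ} {p : ℝ} (h0 : 0 ≤ p) (h1 : p ≤ 1) (G : SimpleGraph (Fin n)) :
    0 ≤ wt p G :=
  mul_nonneg (pow_nonneg h0 _) (pow_nonneg (by linarith) _)

/-! ### Edges touching a vertex set -/

/-- The exponential moment of the number of edges touching `S`, restricted to the event that all
pairs in `F` are edges. -/
lemma moment_bound {n : ℕ} {p l : ℝ} (h0 : 0 ≤ p) (h1 : p ≤ 1) (hl : 1 ≤ l)
    (S : Finset (Fin n)) {F : Finset (Sym2 (Fin n))} (hF : F ⊆ pairs n) :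
    ∑ G : SimpleGraph (Fin n),
        (if F ⊆ edges G then wt p G * l ^ (edges G ∩ touch S).card else 0)
      ≤ (p * l) ^ F.card * Real.exp (l * p) ^ (touch S).card := by
  -- A missing edge of `F` gets weight zero, which encodes the indicator of `F ⊆ edges G`.
  have key : ∀ G : SimpleGraph (Fin n),
      (if F ⊆ edges G then wt p G * l ^ (edges G ∩ touch S).card else 0)
        = (∏ e ∈ edges G, (p * if e ∈ touch S then l else 1)) *
          ∏ e ∈ pairs n \ edges G, (if e ∈ F then 0 else 1 - p) := by
    intro G
    split_ifs with h
    · rw [wt_eq_prod, Finset.prod_mul_distrib, Finset.prod_ite_mem, Finset.prod_const l]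
      have : ∏ e ∈ pairs n \ edges G, (if e ∈ F then 0 else 1 - p)
          = ∏ _e ∈ pairs n \ edges G, (1 - p) :=
        Finset.prod_congr rfl fun e he => if_neg fun hf => (Finset.mem_sdiff.1 he).2 (h hf)
      rw [this]
      ring
    · obtain ⟨e, heF, heG⟩ := Finset.not_subset.1 h
      have : ∏ e ∈ pairs n \ edges G, (if e ∈ F then 0 else 1 - p) = 0 :=
        Finset.prod_eq_zero (Finset.mem_sdiff.2 ⟨hF heF, heG⟩) (if_pos heF)
      rw [this, mul_zero]
  rw [Finset.sum_congr rfl fun G _ => key G, sum_graph_prod]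
  have hexp : 1 ≤ Real.exp (l * p) := Real.one_le_exp (by positivity)
  calc ∏ e ∈ pairs n, ((p * if e ∈ touch S then l else 1) + if e ∈ F then 0 else 1 - p)
      ≤ ∏ e ∈ pairs n, ((if e ∈ F then p * l else 1) *
          (if e ∈ touch S then Real.exp (l * p) else 1)) := by
        refine Finset.prod_le_prod (fun e _ => ?_) fun e _ => ?_
        · have : 0 ≤ 1 - p := by linarith
          positivity
        · have h2 := Real.add_one_le_exp (l * p)
          have h3 : 0 ≤ p * l := by positivity
          have h4 : p * 1 ≤ p * l := by gcongr
          split_ifs <;> nlinarith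
    _ ≤ _ := by
        rw [Finset.prod_mul_distrib, Finset.prod_ite_mem, Finset.prod_ite_mem, Finset.prod_const,
          Finset.prod_const, Finset.inter_eq_right.2 hF]
        gcongr
        exact Finset.inter_subset_right

lemma card_touch_le {n : ℕ} (S : Finset (Fin n)) : (touch S).card ≤ S.card * n := by
  have : touch S ⊆ (S ×ˢ Finset.univ).image fun x : Fin n × Fin n => s(x.1, x.2) := by
    intro e he
    simp only [touch, Finset.mem_filter, Finset.mem_univ, true_and] at he
    obtain ⟨v, hv, w, rfl⟩ := he
    exact Finset.mem_image.2 ⟨(v, w), by simp [hv], rfl⟩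
  calc _ ≤ _ := Finset.card_le_card this
    _ ≤ _ := Finset.card_image_le
    _ = _ := by simp

lemma deg_eq {n : ℕ} (G : SimpleGraph (Fin n)) (v : Fin n) :
    deg G v = ((edges G).filter fun e => v ∈ e).card := by
  have h := G.card_incidenceFinset_eq_degree v
  rw [SimpleGraph.incidenceFinset_eq_filter] at h
  have h2 : deg G v = G.degree v := by
    rw [deg, Nat.card_eq_fintype_card, ← G.card_neighborSet_eq_degree]
    rfl
  rw [h2, ← h]
  congr 1
  ext e
  simp [edges]

/-- Each edge touching `S` is counted at most twice in the degree sum. -/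
lemma sum_deg_le {n : ℕ} (G : SimpleGraph (Fin n)) (S : Finset (Fin n)) :
    ∑ v ∈ S, deg G v ≤ 2 * (edges G ∩ touch S).card := by
  have h1 : ∀ v ∈ S, deg G v =
      (Finset.bipartiteAbove (fun v e => v ∈ e) (edges G ∩ touch S) v).card := by
    intro v hv
    rw [deg_eq]
    congr 1
    ext e
    simp only [Finset.bipartiteAbove, Finset.mem_filter, Finset.mem_inter, touch,
      Finset.mem_univ, true_and]
    exact ⟨fun h => ⟨⟨h.1, v, hv, h.2⟩, h.2⟩, fun h => ⟨h.1.1, h.2⟩⟩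
  rw [Finset.sum_congr rfl h1, Finset.sum_card_bipartiteAbove_eq_sum_card_bipartiteBelow, mul_comm]
  refine Finset.sum_le_card_nsmul _ _ _ fun e _ => ?_
  calc _ ≤ e.toFinset.card := Finset.card_le_card fun v hv => by
        simpa using (Finset.mem_filter.1 hv).2
    _ ≤ 2 := by rw [Sym2.card_toFinset]; split_ifs <;> norm_num

/-! ### Parent maps of connected sets -/

/-- In a connected graph, sending each vertex other than a root `r` to a neighbour closer to `r`
defines a spanning tree: the resulting edges are pairwise distinct. -/
lemma exists_parent {V : Type*} (H : SimpleGraph V) (hH : H.Connected) (r : V) :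
    ∃ f : V → V, f r = r ∧ (∀ v, v ≠ r → H.Adj v (f v)) ∧
      ∀ v w, v ≠ r → w ≠ r → s(v, f v) = s(w, f w) → v = w := by
  have h : ∀ v, v ≠ r → ∃ w, H.Adj v w ∧ H.dist w r < H.dist v r := by
    intro v hv
    obtain ⟨q, hq⟩ := hH.exists_walk_length_eq_dist v r
    cases q with
    | nil => exact absurd rfl hv
    | cons ha q =>
      refine ⟨_, ha, ?_⟩
      have := SimpleGraph.dist_le q
      rw [SimpleGraph.Walk.length_cons] at hq
      omega
  choose! g hg using h
  refine ⟨fun v => if v = r then r else g v, by simp, fun v hv => ?_, fun v w hv hw he => ?_⟩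
  · simpa [hv] using (hg v hv).1
  · simp only [hv, hw, if_false] at he
    rcases Sym2.eq_iff.1 he with h | h
    · exact h.1
    · have h1 := (hg v hv).2
      have h2 := (hg w hw).2
      rw [h.2] at h1
      rw [← h.1] at h2
      omega

/-- A connected set of `k` vertices is witnessed by a parent map with `k - 1` edges, all in `G`. -/
lemma exists_parentEdges {n : ℕ} (G : SimpleGraph (Fin n)) (S : Finset (Fin n))
    (hS : (G.induce (S : Set (Fin n))).Connected) :
    ∃ f : S → S, (parentEdges S f).card + 1 = S.card ∧ parentEdges S f ⊆ edges G := by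
  obtain ⟨r⟩ := hS.nonempty
  obtain ⟨f, hr, hadj, hinj⟩ := exists_parent _ hS r
  have hadj' : ∀ v, v ≠ r → G.Adj (v : Fin n) (f v : Fin n) := fun v hv => hadj v hv
  have heq : parentEdges S f =
      (Finset.univ.erase r).image fun v : S => s((v : Fin n), (f v : Fin n)) := by
    ext e
    simp only [parentEdges, Finset.mem_filter, Finset.mem_image, Finset.mem_erase,
      Finset.mem_univ, true_and, and_true]
    constructor
    · rintro ⟨⟨v, rfl⟩, hd⟩
      refine ⟨v, ?_, rfl⟩
      rintro rfl
      exact hd (by simp [hr])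
    · rintro ⟨v, hv, rfl⟩
      exact ⟨⟨v, rfl⟩, by simpa using (hadj' v hv).ne⟩
  refine ⟨f, ?_, ?_⟩
  · rw [heq, Finset.card_image_of_injOn]
    · rw [Finset.card_erase_of_mem (Finset.mem_univ _), Finset.card_univ, Fintype.card_coe]
      have : 0 < S.card := Finset.card_pos.2 ⟨r, r.2⟩
      omega
    · intro v hv w hw he
      refine hinj v w (by simpa using hv) (by simpa using hw) ?_
      simp only [Sym2.eq_iff, ← Subtype.ext_iff] at he ⊢
      exact he
  · rw [heq]
    intro e he
    obtain ⟨v, hv, rfl⟩ := Finset.mem_image.1 he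
    simpa [edges] using hadj' v (Finset.ne_of_mem_erase hv)

lemma parentEdges_subset_pairs {n : ℕ} (S : Finset (Fin n)) (f : S → S) :
    parentEdges S f ⊆ pairs n := by
  intro e he
  simpa [pairs] using (Finset.mem_filter.1 he).2

/-! ### The first moment bound -/

/-- The event that all connected sets of size `k` have degree sum at most `t`. -/
def Good (n k : ℕ) (t : ℝ) (G : SimpleGraph (Fin n)) : Prop :=
  ∀ S : Finset (Fin n), (G.induce (S : Set (Fin n))).Connected → S.card = k →
    (∑ v ∈ S, (deg G v : ℝ)) ≤ t

lemma erProb_eq (n : ℕ) (p : ℝ) (P : SimpleGraph (Fin n) → Prop) :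
    erProb n p P = 1 - ∑ G : SimpleGraph (Fin n), if P G then 0 else wt p G := by
  rw [← sum_wt n p, ← Finset.sum_sub_distrib, erProb]
  refine Finset.sum_congr rfl fun G _ => ?_
  split_ifs <;> simp [wt]

/-- The first moment bound: a union bound over vertex sets and parent maps, with Markov's
inequality applied to `l ^ (number of edges touching S)`. -/
lemma bad_le {n k : ℕ} {p l t : ℝ} (h0 : 0 ≤ p) (h1 : p ≤ 1) (hl : 1 ≤ l) :
    ∑ G : SimpleGraph (Fin n), (if Good n k t G then 0 else wt p G)
      ≤ (n.choose k : ℝ) * ((k : ℝ) ^ k *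
        ((p * l) ^ (k - 1) * Real.exp (l * p) ^ (k * n) * l ^ (-(t / 2)))) := by
  have hl0 : 0 < l := by linarith
  have hexp : 1 ≤ Real.exp (l * p) := Real.one_le_exp (by positivity)
  let T (G : SimpleGraph (Fin n)) (S : Finset (Fin n)) (f : S → S) : ℝ :=
    if (parentEdges S f).card + 1 = k then
      (if parentEdges S f ⊆ edges G then wt p G * l ^ (edges G ∩ touch S).card else 0) *
        l ^ (-(t / 2))
    else 0
  have hT : ∀ G S f, 0 ≤ T G S f := by
    intro G S f
    have := wt_nonneg h0 h1 G
    dsimp only [T]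
    positivity
  have hpoint : ∀ G : SimpleGraph (Fin n), (if Good n k t G then 0 else wt p G) ≤
      ∑ S ∈ Finset.powersetCard k Finset.univ, ∑ f : S → S, T G S f := by
    intro G
    split_ifs with hG
    · exact Finset.sum_nonneg fun S _ => Finset.sum_nonneg fun f _ => hT G S f
    · simp only [Good, not_forall, not_le] at hG
      obtain ⟨S, hS, hk, ht⟩ := hG
      obtain ⟨f, hf, hfG⟩ := exists_parentEdges G S hS
      have hmem : S ∈ Finset.powersetCard k Finset.univ := by simp [hk]
      refine le_trans ?_ (Finset.single_le_sum (f := fun S : Finset (Fin n) => ∑ f : S → S, T G S f)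
        (fun S _ => Finset.sum_nonneg fun f _ => hT G S f) hmem)
      refine le_trans ?_ (Finset.single_le_sum (f := fun f : S → S => T G S f)
        (fun f _ => hT G S f) (Finset.mem_univ f))
      simp only [T, hf, hk, hfG, if_true]
      rw [mul_assoc, ← Real.rpow_natCast, ← Real.rpow_add hl0]
      have hdeg : (∑ v ∈ S, (deg G v : ℝ)) ≤ 2 * ((edges G ∩ touch S).card : ℝ) := by
        exact_mod_cast sum_deg_le G S
      exact le_mul_of_one_le_right (wt_nonneg h0 h1 G) (Real.one_le_rpow hl (by linarith))
  have hmoment : ∀ S ∈ Finset.powersetCard k (Finset.univ : Finset (Fin n)), ∀ f : S → S,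
      ∑ G : SimpleGraph (Fin n), T G S f ≤
        (p * l) ^ (k - 1) * Real.exp (l * p) ^ (k * n) * l ^ (-(t / 2)) := by
    intro S hS f
    have hk := (Finset.mem_powersetCard.1 hS).2
    simp only [T]
    split_ifs with hc
    · rw [← Finset.sum_mul]
      refine mul_le_mul_of_nonneg_right ?_ (by positivity)
      refine (moment_bound h0 h1 hl S (parentEdges_subset_pairs S f)).trans ?_
      rw [show (parentEdges S f).card = k - 1 by omega]
      gcongr
      exact hk ▸ card_touch_le S
    · rw [Finset.sum_const_zero]
      positivity
  calc _ ≤ ∑ G : SimpleGraph (Fin n),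
        ∑ S ∈ Finset.powersetCard k Finset.univ, ∑ f : S → S, T G S f :=
        Finset.sum_le_sum fun G _ => hpoint G
    _ = ∑ S ∈ Finset.powersetCard k Finset.univ, ∑ f : S → S,
          ∑ G : SimpleGraph (Fin n), T G S f := by
        rw [Finset.sum_comm]
        exact Finset.sum_congr rfl fun S _ => Finset.sum_comm
    _ ≤ ∑ S ∈ Finset.powersetCard k (Finset.univ : Finset (Fin n)), ∑ _f : S → S,
          (p * l) ^ (k - 1) * Real.exp (l * p) ^ (k * n) * l ^ (-(t / 2)) :=
        Finset.sum_le_sum fun S hS => Finset.sum_le_sum fun f _ => hmoment S hS f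
    _ = _ := by
        have : ∀ S ∈ Finset.powersetCard k (Finset.univ : Finset (Fin n)), (∑ _f : S → S,
            (p * l) ^ (k - 1) * Real.exp (l * p) ^ (k * n) * l ^ (-(t / 2))) = (k : ℝ) ^ k *
              ((p * l) ^ (k - 1) * Real.exp (l * p) ^ (k * n) * l ^ (-(t / 2))) := by
          intro S hS
          rw [Finset.sum_const, Finset.card_univ, Fintype.card_fun, Fintype.card_coe,
            (Finset.mem_powersetCard.1 hS).2, nsmul_eq_mul, Nat.cast_pow]
        rw [Finset.sum_congr rfl this, Finset.sum_const, Finset.card_powersetCard,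
          Finset.card_univ, Fintype.card_fin, nsmul_eq_mul]

/-- The first moment bound at `p = d / n`, with all factors written as exponentials. -/
lemma bound_exp {n k : ℕ} {d l t : ℝ} (hd : 0 < d) (hl : 1 ≤ l) (hn : 0 < n) (hk : 0 < k) :
    (n.choose k : ℝ) * ((k : ℝ) ^ k *
        ((d / n * l) ^ (k - 1) * Real.exp (l * (d / n)) ^ (k * n) * l ^ (-(t / 2))))
      ≤ Real.exp (Real.log n + k * (1 + d + Real.log l + l * d) - t / 2 * Real.log l) := by
  have hl0 : 0 < l := by linarith
  have hn' : (0 : ℝ) < n := by exact_mod_cast hn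
  obtain ⟨m, rfl⟩ : ∃ m, k = m + 1 := ⟨k - 1, by omega⟩
  have e1 : (n.choose (m + 1) : ℝ) * ((m + 1 : ℕ) : ℝ) ^ (m + 1) ≤
      n ^ (m + 1) * Real.exp ((m + 1 : ℕ) : ℝ) := by
    calc _ ≤ (n : ℝ) ^ (m + 1) / ((m + 1).factorial : ℝ) * ((m + 1 : ℕ) : ℝ) ^ (m + 1) := by
          gcongr
          exact Nat.choose_le_pow_div _ _
      _ = n ^ (m + 1) * (((m + 1 : ℕ) : ℝ) ^ (m + 1) / ((m + 1).factorial : ℝ)) := by ring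
      _ ≤ _ := by
          gcongr
          exact Real.pow_div_factorial_le_exp _ (by positivity) _
  have e2 : (n : ℝ) ^ (m + 1) * (d / n * l) ^ m = n * (d * l) ^ m := by
    rw [show d / n * l = d * l / n by ring, div_pow]
    field_simp
    ring
  have e3 : (d * l) ^ m ≤ Real.exp ((m + 1 : ℕ) * (d + Real.log l)) := by
    rw [Real.exp_nat_mul, Real.exp_add, Real.exp_log hl0]
    have h1 : d ≤ Real.exp d := by linarith [Real.add_one_le_exp d]
    have h2 : 1 ≤ Real.exp d * l := by nlinarith [Real.one_le_exp hd.le]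
    calc _ ≤ (Real.exp d * l) ^ m := by gcongr
      _ ≤ _ := pow_le_pow_right₀ h2 (by omega)
  have e4 : Real.exp (l * (d / n)) ^ ((m + 1) * n) = Real.exp ((m + 1 : ℕ) * (l * d)) := by
    rw [← Real.exp_nat_mul]
    congr 1
    push_cast
    field_simp
  have e5 : l ^ (-(t / 2)) = Real.exp (-(t / 2 * Real.log l)) := by
    rw [Real.rpow_def_of_pos hl0]
    congr 1
    ring
  rw [Nat.add_sub_cancel, e4, e5]
  calc _ = (n.choose (m + 1) : ℝ) * ((m + 1 : ℕ) : ℝ) ^ (m + 1) *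
        ((d / n * l) ^ m * Real.exp ((m + 1 : ℕ) * (l * d)) *
          Real.exp (-(t / 2 * Real.log l))) := by ring
    _ ≤ n ^ (m + 1) * Real.exp ((m + 1 : ℕ) : ℝ) *
        ((d / n * l) ^ m * Real.exp ((m + 1 : ℕ) * (l * d)) *
          Real.exp (-(t / 2 * Real.log l))) := by
        refine mul_le_mul_of_nonneg_right e1 (by positivity)
    _ = n ^ (m + 1) * (d / n * l) ^ m * Real.exp ((m + 1 : ℕ) : ℝ) *
        Real.exp ((m + 1 : ℕ) * (l * d)) * Real.exp (-(t / 2 * Real.log l)) := by ring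
    _ ≤ n * Real.exp ((m + 1 : ℕ) * (d + Real.log l)) * Real.exp ((m + 1 : ℕ) : ℝ) *
        Real.exp ((m + 1 : ℕ) * (l * d)) * Real.exp (-(t / 2 * Real.log l)) := by
        rw [e2]
        gcongr
    _ = _ := by
        nth_rw 1 [← Real.exp_log hn']
        simp only [← Real.exp_add]
        congr 1
        ring

/-! ### The choice of constants -/

/-- there is `M > 0` such that for any `δ ∈ (0,1)`, whp over `G ∼ G(n,d/n)`
every connected vertex set `S` with `|S| = ⌈δ log n⌉` satisfies
`deg_G(S) ≤ MΔ|S|`, where `Δ = 1/(δ log(1/δ))`. -/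
theorem stmt15 (d : ℝ) (hd : 0 < d) :
    ∃ M : ℝ, 0 < M ∧ ∀ δ : ℝ, 0 < δ → δ < 1 →
      Filter.Tendsto (fun n : ℕ => erProb n (d / n) (fun G =>
          ∀ S : Finset (Fin n), (G.induce (S : Set (Fin n))).Connected →
            S.card = ⌈δ * Real.log n⌉₊ →
            (∑ v ∈ S, (deg G v : ℝ)) ≤ M * (1 / (δ * Real.log (1 / δ))) * S.card))
        Filter.atTop (nhds 1) := by
  refine ⟨8 + 4 * d, by positivity, fun δ hδ hδ1 => ?_⟩
  have hL : 0 < Real.log (1 / δ) := Real.log_pos (by rw [lt_div_iff₀ hδ]; linarith)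
  have hl : 1 ≤ 1 / δ := by rw [le_div_iff₀ hδ]; linarith
  -- The probability of failure is at most `1 / n`.
  have main : ∀ n : ℕ, 2 ≤ n → d ≤ n → ∑ G : SimpleGraph (Fin n),
      (if Good n ⌈δ * Real.log n⌉₊
        ((8 + 4 * d) * (1 / (δ * Real.log (1 / δ))) * (⌈δ * Real.log n⌉₊ : ℝ)) G
        then 0 else wt (d / n) G) ≤ 1 / (n : ℝ) := by
    intro n hn hdn
    have hn' : (0 : ℝ) < n := by positivity
    have hlog : 0 < Real.log n := Real.log_pos (by exact_mod_cast hn)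
    have hk : 0 < ⌈δ * Real.log n⌉₊ := Nat.ceil_pos.2 (by positivity)
    have hkr : δ * Real.log n ≤ (⌈δ * Real.log n⌉₊ : ℝ) := Nat.le_ceil _
    generalize ⌈δ * Real.log n⌉₊ = k at *
    -- The choice `l = 1 / δ` makes the Markov factor `exp (-(4 + 2 d) k / δ)`, which beats
    -- the count `exp (log n + O(k / δ))` because `log n ≤ k / δ`.
    refine (bad_le (by positivity) ((div_le_one hn').2 hdn) hl).trans
      ((bound_exp hd hl (by omega) hk).trans ?_)
    rw [one_div (n : ℝ), ← Real.exp_log (inv_pos.2 hn'), Real.log_inv]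
    refine Real.exp_le_exp.2 ?_
    have e1 : (8 + 4 * d) * (1 / (δ * Real.log (1 / δ))) * (k : ℝ) / 2 * Real.log (1 / δ)
        = (4 + 2 * d) * ((k : ℝ) / δ) := by
      field_simp
      ring
    rw [e1]
    have e2 : Real.log n ≤ (k : ℝ) / δ := by rw [le_div_iff₀ hδ]; linarith
    have e3 : Real.log (1 / δ) ≤ 1 / δ - 1 := Real.log_le_sub_one_of_pos (by positivity)
    have e4 : (k : ℝ) * (1 + d + Real.log (1 / δ) + 1 / δ * d) ≤
        (k : ℝ) * ((2 + 2 * d) * (1 / δ)) := by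
      gcongr
      nlinarith
    have e5 : (k : ℝ) * ((2 + 2 * d) * (1 / δ)) = (2 + 2 * d) * ((k : ℝ) / δ) := by ring
    rw [e5] at e4
    linarith
  have hev : ∀ᶠ n : ℕ in atTop, 2 ≤ n ∧ d ≤ n :=
    (eventually_ge_atTop 2).and (tendsto_natCast_atTop_atTop.eventually_ge_atTop d)
  have hgood : ∀ n : ℕ, (fun G : SimpleGraph (Fin n) =>
      ∀ S : Finset (Fin n), (G.induce (S : Set (Fin n))).Connected →
        S.card = ⌈δ * Real.log n⌉₊ →
        (∑ v ∈ S, (deg G v : ℝ)) ≤ (8 + 4 * d) * (1 / (δ * Real.log (1 / δ))) * S.card) =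
      Good n ⌈δ * Real.log n⌉₊
        ((8 + 4 * d) * (1 / (δ * Real.log (1 / δ))) * (⌈δ * Real.log n⌉₊ : ℝ)) := by
    intro n
    ext G
    refine forall_congr' fun S => forall_congr' fun _ => forall_congr' fun hc => ?_
    rw [hc]
  simp only [hgood, erProb_eq]
  have h0 : Tendsto (fun n : ℕ => 1 - 1 / (n : ℝ)) atTop (nhds 1) := by
    simpa using tendsto_one_div_atTop_nhds_zero_nat.const_sub (1 : ℝ)
  refine tendsto_of_tendsto_of_tendsto_of_le_of_le' h0 tendsto_const_nhds ?_ ?_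
  · filter_upwards [hev] with n hn
    linarith [main n hn.1 hn.2]
  · filter_upwards [hev] with n hn
    have hn' : (0 : ℝ) < n := by
      have := hn.1
      positivity
    refine sub_le_self _ (Finset.sum_nonneg fun G _ => ?_)
    split_ifs
    · exact le_rfl
    · exact wt_nonneg (by positivity) ((div_le_one hn').2 hn.2) G
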